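/- If G is a k-connected graph of order n, then the density D(G) = A(G)/n of connected vertex sets satisfies D(G) ≥ (1/2)·(1 − 1/(2^k + 1)). -/

import Mathlib

open Finset Filter

attribute [local instance] Classical.propDecidable

noncomputable def connSets {V : Type*} [Fintype V] (G : SimpleGraph V) : Finset (Finset V) :=
  Finset.univ.filter fun U => U.Nonempty ∧ (G.induce (U : Set V)).Connected

def KConnected {V : Type*} [Fintype V] (k : ℕ) (G : SimpleGraph V) : Prop :=
  k < Fintype.card V ∧
    ∀ S : Finset V, S.card < k → (G.induce ((Sᶜ : Finset V) : Set V)).Connected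

/-!
Write `[R, H]` for the connected sets `U` with `R ⊆ U ⊆ H`. If `R` is connected, the members of
`[R, H]` have average size at least `(|H| + |R|) / 2`: choose `x` adjacent to `R`, let `K` be the
component of `H - x` containing `R`, and split `[R, H] = [R + x, H] ⊔ [R, K]`. The second part may
be light, but each of its members extends into the connected set `H \ K` in at least `|H \ K|` ways,
so the first part outweighs it.

For `k = 1`, some non-cut vertex `y` lies in at least a proportion `2 / (|H| + 1)` of the connected
subsets of `H`, and deleting it gives average size at least `(|H| + 2) / 3` by induction. For
larger `k`, delete each vertex in turn and average the bounds for the `k`-connected remainders,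
using that the numbers of connected sets through each vertex add up to the total size.
-/

section ConnectedSets

variable {V : Type*} {G : SimpleGraph V} {A H K M R S U W : Finset V} {a b r x y z : V} {j k : ℕ}

/-- `U` induces a connected subgraph of `G`; in particular `U` is nonempty. -/
def ConnectedOn (G : SimpleGraph V) (U : Finset V) : Prop :=
  (G.induce (U : Set V)).Connected

/-- `K` is the vertex set of a connected component of the subgraph of `G` induced by `M`, encoded
as a maximal connected subset of `M`. -/
def IsComponent (G : SimpleGraph V) (M K : Finset V) : Prop :=
  Maximal (fun U => U ⊆ M ∧ ConnectedOn G U) K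

theorem connectedOn_singleton (v : V) : ConnectedOn G {v} := by
  rw [ConnectedOn, coe_singleton, SimpleGraph.induce_singleton_eq_top]
  exact SimpleGraph.connected_top

namespace ConnectedOn

theorem nonempty (h : ConnectedOn G U) : U.Nonempty :=
  let ⟨v⟩ := SimpleGraph.Connected.nonempty h
  ⟨v.1, v.2⟩

theorem union (hU : ConnectedOn G U) (hW : ConnectedOn G W) (h : (U ∩ W).Nonempty) :
    ConnectedOn G (U ∪ W) := by
  rw [ConnectedOn, coe_union]
  exact SimpleGraph.induce_union_connected hU.preconnected hW.preconnected (by exact_mod_cast h)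

theorem insert_of_adj (hU : ConnectedOn G U) (ha : a ∈ U) (hab : G.Adj a b) :
    ConnectedOn G (insert b U) := by
  have hpair : ConnectedOn G {a, b} := by
    rw [ConnectedOn, coe_pair]
    exact SimpleGraph.induce_pair_connected_of_adj hab
  have heq : U ∪ {a, b} = insert b U := by grind
  exact heq ▸ hU.union hpair ⟨a, by simp [ha]⟩

theorem exists_adj_of_ssubset (hH : ConnectedOn G H) (hA : A.Nonempty) (hAH : A ⊂ H) :
    ∃ a ∈ A, ∃ b ∈ H \ A, G.Adj a b := by
  obtain ⟨a, ha⟩ := hA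
  obtain ⟨b, hb, hbA⟩ := exists_of_ssubset hAH
  obtain ⟨p⟩ := hH.preconnected ⟨a, hAH.subset ha⟩ ⟨b, hb⟩
  obtain ⟨d, -, hfst, hsnd⟩ := p.exists_boundary_dart {v | v.1 ∈ A} ha hbA
  exact ⟨d.fst, hfst, d.snd, mem_sdiff.2 ⟨d.snd.2, hsnd⟩, d.adj⟩

end ConnectedOn

namespace IsComponent

theorem subset (hK : IsComponent G M K) : K ⊆ M := hK.prop.1

theorem connectedOn (hK : IsComponent G M K) : ConnectedOn G K := hK.prop.2

theorem subset_of_erase (hK : IsComponent G (H.erase x) K) : K ⊆ H :=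
  hK.subset.trans (erase_subset x H)

theorem notMem_of_erase (hK : IsComponent G (H.erase x) K) : x ∉ K :=
  fun h => notMem_erase x H (hK.subset h)

theorem subset_of_inter_nonempty (hK : IsComponent G M K) (hUM : U ⊆ M)
    (hU : ConnectedOn G U) (h : (K ∩ U).Nonempty) : U ⊆ K :=
  subset_union_right.trans <|
    hK.le_of_ge ⟨union_subset hK.subset hUM, hK.connectedOn.union hU h⟩ subset_union_left

theorem mem_of_adj (hK : IsComponent G M K) (ha : a ∈ K) (hb : b ∈ M)
    (hab : G.Adj a b) : b ∈ K :=
  hK.le_of_ge ⟨insert_subset hb hK.subset, hK.connectedOn.insert_of_adj ha hab⟩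
    (subset_insert b K) (mem_insert_self b K)

end IsComponent

theorem ConnectedOn.exists_isComponent (hR : ConnectedOn G R) (hRM : R ⊆ M) :
    ∃ K, R ⊆ K ∧ IsComponent G M K := by
  have hmem (U : Finset V) : U ∈ {U ∈ M.powerset | ConnectedOn G U} ↔ U ⊆ M ∧ ConnectedOn G U := by
    rw [mem_filter, mem_powerset]
  obtain ⟨K, hRK, hK⟩ := exists_le_maximal {U ∈ M.powerset | ConnectedOn G U} ((hmem R).2 ⟨hRM, hR⟩)
  exact ⟨K, hRK, (hmem K).1 hK.prop, fun U hU hKU => hK.le_of_ge ((hmem U).2 hU) hKU⟩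

theorem IsComponent.connectedOn_sdiff (hK : IsComponent G (H.erase x) K)
    (hH : ConnectedOn G H) (hx : x ∈ H) : ConnectedOn G (H \ K) := by
  have hKH := hK.subset_of_erase
  have hxK := hK.notMem_of_erase
  obtain ⟨Y, hxY, hY⟩ := (connectedOn_singleton (G := G) x).exists_isComponent
    (singleton_subset_iff.2 (mem_sdiff.2 ⟨hx, hxK⟩))
  rw [singleton_subset_iff] at hxY
  suffices H \ K ⊆ Y from hY.subset.antisymm this ▸ hY.connectedOn
  by_contra hYne
  have hss : K ∪ Y ⊂ H :=
    ⟨union_subset hKH (hY.subset.trans sdiff_subset),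
      fun h => hYne fun v hv => by grind⟩
  obtain ⟨a, ha, b, hb, hab⟩ := hH.exists_adj_of_ssubset ⟨x, mem_union_right K hxY⟩ hss
  obtain ⟨hbH, hbKY⟩ := mem_sdiff.1 hb
  obtain ⟨hbK, hbY⟩ := notMem_union.1 hbKY
  rcases mem_union.1 ha with ha | ha
  · exact hbK (hK.mem_of_adj ha (mem_erase.2 ⟨fun h => hbY (h ▸ hxY), hbH⟩) hab)
  · exact hbY (hY.mem_of_adj ha (mem_sdiff.2 ⟨hbH, hbK⟩) hab)

theorem ConnectedOn.interval_induction {P : Finset V → Finset V → Prop}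
    (refl : ∀ H, ConnectedOn G H → P H H)
    (step : ∀ R K H x, ConnectedOn G R → ConnectedOn G H → x ∈ H → ConnectedOn G (insert x R) →
      R ⊆ K → IsComponent G (H.erase x) K → P (insert x R) H → P R K → P R H)
    (hR : ConnectedOn G R) (hH : ConnectedOn G H) (hRH : R ⊆ H) : P R H := by
  induction hn : #(H \ R) using Nat.strong_induction_on generalizing R H with
  | _ n ih =>
  obtain rfl | hss := hRH.eq_or_ssubset
  · exact refl R hR
  obtain ⟨a, ha, x, hx, hax⟩ := hH.exists_adj_of_ssubset hR.nonempty hss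
  obtain ⟨hxH, hxR⟩ := mem_sdiff.1 hx
  obtain ⟨K, hRK, hK⟩ := hR.exists_isComponent (subset_erase.2 ⟨hRH, hxR⟩)
  have hxK := hK.notMem_of_erase
  have hRx := hR.insert_of_adj ha hax
  refine step R K H x hR hH hxH hRx hRK hK
    (ih _ ?_ hRx hH (insert_subset hxH hRH) rfl) (ih _ ?_ hR hK.connectedOn hRK rfl)
  all_goals
    rw [← hn]
    refine card_lt_card (ssubset_iff_of_subset ?_ |>.2 ⟨x, hx, by grind⟩)
  · exact sdiff_subset_sdiff Subset.rfl (subset_insert x R)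
  · exact sdiff_subset_sdiff hK.subset_of_erase Subset.rfl

/-- The connected sets `U` with `R ⊆ U ⊆ H`. Taking `R = ∅` gives all connected subsets of `H`, and
`R = {v}` those through the vertex `v`. -/
noncomputable def connIcc (G : SimpleGraph V) (R H : Finset V) : Finset (Finset V) :=
  {U ∈ Icc R H | ConnectedOn G U}

/-- The total size of the connected sets between `R` and `H`. -/
noncomputable def connSize (G : SimpleGraph V) (R H : Finset V) : ℕ :=
  ∑ U ∈ connIcc G R H, #U

section Counting

theorem mem_connIcc : U ∈ connIcc G R H ↔ R ⊆ U ∧ U ⊆ H ∧ ConnectedOn G U := by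
  simp only [connIcc, mem_filter, mem_Icc, and_assoc]

theorem connIcc_subset_connIcc (hR : R ⊆ S) (hH : H ⊆ K) : connIcc G S H ⊆ connIcc G R K :=
  filter_subset_filter _ (Icc_subset_Icc hR hH)

theorem connIcc_self (hH : ConnectedOn G H) : connIcc G H H = {H} := by
  rw [connIcc, Icc_self, filter_singleton, if_pos hH]

theorem connIcc_empty_empty : connIcc G ∅ ∅ = ∅ :=
  eq_empty_of_forall_notMem fun _ hU =>
    let ⟨_, hsub, hconn⟩ := mem_connIcc.1 hU
    hconn.nonempty.ne_empty (subset_empty.1 hsub)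

theorem disjoint_connIcc_insert_erase (G : SimpleGraph V) (R H : Finset V) (x : V) :
    Disjoint (connIcc G (insert x R) H) (connIcc G R (H.erase x)) :=
  disjoint_left.2 fun _ h h' =>
    notMem_erase x H ((mem_connIcc.1 h').2.1 ((mem_connIcc.1 h).1 (mem_insert_self x R)))

theorem connIcc_insert_union_erase (G : SimpleGraph V) (R H : Finset V) (x : V) :
    connIcc G (insert x R) H ∪ connIcc G R (H.erase x) = connIcc G R H := by
  ext U
  simp only [mem_union, mem_connIcc, insert_subset_iff, subset_erase]
  tauto

theorem card_connIcc_insert_add_erase (G : SimpleGraph V) (R H : Finset V) (x : V) :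
    #(connIcc G (insert x R) H) + #(connIcc G R (H.erase x)) = #(connIcc G R H) := by
  rw [← card_union_of_disjoint (disjoint_connIcc_insert_erase G R H x),
    connIcc_insert_union_erase]

theorem connSize_insert_add_erase (G : SimpleGraph V) (R H : Finset V) (x : V) :
    connSize G (insert x R) H + connSize G R (H.erase x) = connSize G R H := by
  rw [connSize, connSize, ← sum_union (disjoint_connIcc_insert_erase G R H x),
    connIcc_insert_union_erase, connSize]

theorem card_connIcc_singleton_add_erase (G : SimpleGraph V) (H : Finset V) (v : V) :
    #(connIcc G {v} H) + #(connIcc G ∅ (H.erase v)) = #(connIcc G ∅ H) :=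
  card_connIcc_insert_add_erase G ∅ H v

theorem connSize_singleton_add_erase (G : SimpleGraph V) (H : Finset V) (v : V) :
    connSize G {v} H + connSize G ∅ (H.erase v) = connSize G ∅ H :=
  connSize_insert_add_erase G ∅ H v

theorem sum_card_connIcc_singleton (G : SimpleGraph V) (H : Finset V) :
    ∑ v ∈ H, #(connIcc G {v} H) = connSize G ∅ H := by
  have hthrough (v : V) : connIcc G {v} H = {U ∈ connIcc G ∅ H | v ∈ U} := by
    ext U
    simp only [mem_filter, mem_connIcc, singleton_subset_iff, empty_subset, true_and]
    tauto
  have hinter (U : Finset V) (hU : U ∈ connIcc G ∅ H) : {v ∈ H | v ∈ U} = U := by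
    rw [filter_mem_eq_inter, inter_eq_right.2 (mem_connIcc.1 hU).2.1]
  calc ∑ v ∈ H, #(connIcc G {v} H)
      = ∑ v ∈ H, #{U ∈ connIcc G ∅ H | v ∈ U} := by simp only [hthrough]
    _ = ∑ U ∈ connIcc G ∅ H, #{v ∈ H | v ∈ U} :=
        sum_card_bipartiteAbove_eq_sum_card_bipartiteBelow (· ∈ ·)
    _ = connSize G ∅ H := sum_congr rfl fun U hU => by rw [hinter U hU]

end Counting

section Intervals

theorem IsComponent.connIcc_erase (hK : IsComponent G (H.erase x) K) (hR : ConnectedOn G R)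
    (hRK : R ⊆ K) : connIcc G R (H.erase x) = connIcc G R K := by
  refine Subset.antisymm (fun U hU => ?_) (connIcc_subset_connIcc Subset.rfl hK.subset)
  obtain ⟨hRU, hUH, hU⟩ := mem_connIcc.1 hU
  exact mem_connIcc.2 ⟨hRU, hK.subset_of_inter_nonempty hUH hU
    (hR.nonempty.mono (subset_inter hRK hRU)), hU⟩

theorem IsComponent.connSize_erase (hK : IsComponent G (H.erase x) K) (hR : ConnectedOn G R)
    (hRK : R ⊆ K) : connSize G R (H.erase x) = connSize G R K := by
  rw [connSize, hK.connIcc_erase hR hRK, connSize]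

theorem card_connIcc_mul_card_connIcc_sdiff_le (hR : R.Nonempty) (hRx : ConnectedOn G (insert x R))
    (hKH : K ⊆ H) (hxS : x ∈ S) :
    #(connIcc G R K) * #(connIcc G S (H \ K)) ≤ #(connIcc G (R ∪ S) H) := by
  rw [← card_product]
  refine card_le_card_of_injOn (fun p => p.1 ∪ p.2) ?_ ?_
  · rintro ⟨U, W⟩ hUW
    simp only [coe_product, Set.mem_prod, mem_coe, mem_connIcc] at hUW ⊢
    obtain ⟨⟨hRU, hUK, hU⟩, hSW, hWK, hW⟩ := hUW
    refine ⟨union_subset_union hRU hSW, union_subset (hUK.trans hKH) (hWK.trans sdiff_subset), ?_⟩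
    have heq : U ∪ insert x R ∪ W = U ∪ W := by grind
    have hUx : ConnectedOn G (U ∪ insert x R) :=
      hU.union hRx (hR.mono (subset_inter hRU (subset_insert x R)))
    exact heq ▸ hUx.union hW ⟨x, by grind⟩
  · rintro ⟨U, W⟩ hUW ⟨U', W'⟩ hUW' (heq : U ∪ W = U' ∪ W')
    simp only [coe_product, Set.mem_prod, mem_coe, mem_connIcc] at hUW hUW'
    have hmem (v : V) : v ∈ U ∪ W ↔ v ∈ U' ∪ W' := by rw [heq]
    have hU : U = U' := by ext v; have := hmem v; grind
    have hW : W = W' := by ext v; have := hmem v; grind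
    rw [hU, hW]

theorem ConnectedOn.card_sdiff_lt_card_connIcc (hR : ConnectedOn G R) (hH : ConnectedOn G H)
    (hRH : R ⊆ H) : #(H \ R) < #(connIcc G R H) := by
  refine ConnectedOn.interval_induction (P := fun R H => #(H \ R) < #(connIcc G R H))
    ?_ ?_ hR hH hRH
  · intro H hH
    simp [connIcc_self hH]
  · intro R K H x hR _ hxH _ hRK hK hlt _
    have hx : x ∈ H \ R := mem_sdiff.2 ⟨hxH, fun h => hK.notMem_of_erase (hRK h)⟩
    have hself : 0 < #(connIcc G R (H.erase x)) :=
      card_pos.2 ⟨R, mem_connIcc.2 ⟨Subset.rfl, hRK.trans hK.subset, hR⟩⟩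
    rw [sdiff_insert] at hlt
    have := card_erase_add_one hx
    have := card_connIcc_insert_add_erase G R H x
    omega

theorem ConnectedOn.exists_connectedOn_erase (hR : ConnectedOn G R) (hH : ConnectedOn G H)
    (hRH : R ⊂ H) : ∃ y ∈ H \ R, ConnectedOn G (H.erase y) := by
  refine ConnectedOn.interval_induction
    (P := fun R H => R ⊂ H → ∃ y ∈ H \ R, ConnectedOn G (H.erase y)) ?_ ?_ hR hH hRH.subset hRH
  · exact fun H _ h => absurd h (ssubset_irrefl H)
  · intro R K H x hR _ hxH _ hRK hK ih _ _
    have hRH : R ⊆ H.erase x := hRK.trans hK.subset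
    have hxR : x ∉ R := fun h => notMem_erase x H (hRH h)
    have hRxH : insert x R ⊆ H := insert_subset hxH (hRH.trans (erase_subset x H))
    obtain heq | hss := hRxH.eq_or_ssubset
    · refine ⟨x, mem_sdiff.2 ⟨hxH, hxR⟩, ?_⟩
      rwa [← heq, erase_insert hxR]
    · obtain ⟨y, hy, hconn⟩ := ih hss
      exact ⟨y, sdiff_subset_sdiff Subset.rfl (subset_insert x R) hy, hconn⟩

theorem IsComponent.card_connIcc_le_card_connIcc_insert (hK : IsComponent G (H.erase x) K)
    (hH : ConnectedOn G H) (hx : x ∈ H) (hR : R.Nonempty) (hRx : ConnectedOn G (insert x R))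
    (hy : y ∈ H \ K) : #(connIcc G R K) ≤ #(connIcc G (insert y R) H) := by
  have hxy : {x, y} ⊆ H \ K :=
    insert_subset (mem_sdiff.2 ⟨hx, hK.notMem_of_erase⟩) (singleton_subset_iff.2 hy)
  have hpos : 0 < #(connIcc G {x, y} (H \ K)) :=
    card_pos.2 ⟨H \ K, mem_connIcc.2 ⟨hxy, Subset.rfl, hK.connectedOn_sdiff hH hx⟩⟩
  calc #(connIcc G R K)
      ≤ #(connIcc G R K) * #(connIcc G {x, y} (H \ K)) := Nat.le_mul_of_pos_right _ hpos
    _ ≤ #(connIcc G (R ∪ {x, y}) H) :=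
        card_connIcc_mul_card_connIcc_sdiff_le hR hRx hK.subset_of_erase (mem_insert_self x {y})
    _ ≤ #(connIcc G (insert y R) H) :=
        card_le_card (connIcc_subset_connIcc (by grind) Subset.rfl)

theorem ConnectedOn.card_connIcc_le_mul_insert (hR : ConnectedOn G R) (hH : ConnectedOn G H)
    (hRH : R ⊆ H) (hy : y ∈ H) :
    #(connIcc G R H) ≤ (#(H \ R) + 1) * #(connIcc G (insert y R) H) := by
  refine ConnectedOn.interval_induction
    (P := fun R H => ∀ y ∈ H, #(connIcc G R H) ≤ (#(H \ R) + 1) * #(connIcc G (insert y R) H))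
    ?_ ?_ hR hH hRH y hy
  · intro H _ y hy
    simp [insert_eq_of_mem hy]
  · intro R K H x hR hH hxH hRx hRK hK ihx ihK y hy
    have hcard : #(H \ R) = #(H \ insert x R) + 1 := by
      rw [sdiff_insert,
        card_erase_add_one (mem_sdiff.2 ⟨hxH, fun h => hK.notMem_of_erase (hRK h)⟩)]
    have hsplit := card_connIcc_insert_add_erase G R H x
    rw [hK.connIcc_erase hR hRK] at hsplit
    have hx := ihx y hy
    rw [insert_comm] at hx
    by_cases hyK : y ∈ K
    · have hsplit_y := card_connIcc_insert_add_erase G (insert y R) H x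
      have hmono : #(connIcc G (insert y R) K) ≤ #(connIcc G (insert y R) (H.erase x)) :=
        card_le_card (connIcc_subset_connIcc Subset.rfl hK.subset)
      have hKcard : #(K \ R) ≤ #(H \ insert x R) := by
        rw [sdiff_insert, ← erase_sdiff_comm]
        exact card_le_card (sdiff_subset_sdiff hK.subset Subset.rfl)
      have hKle := (ihK y hyK).trans (Nat.mul_le_mul (Nat.succ_le_succ hKcard) hmono)
      rw [← hsplit, ← hsplit_y, hcard]
      linarith
    · have hKle := hK.card_connIcc_le_card_connIcc_insert hH hxH hR.nonempty hRx
        (mem_sdiff.2 ⟨hy, hyK⟩)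
      have hmono : #(connIcc G (insert x (insert y R)) H) ≤ #(connIcc G (insert y R) H) :=
        card_le_card (connIcc_subset_connIcc (subset_insert x _) Subset.rfl)
      have hxle := hx.trans (Nat.mul_le_mul_left _ hmono)
      rw [← hsplit, hcard]
      linarith

theorem IsComponent.card_connIcc_mul_card_sdiff_le (hK : IsComponent G (H.erase x) K)
    (hH : ConnectedOn G H) (hx : x ∈ H) (hR : R.Nonempty) (hRx : ConnectedOn G (insert x R)) :
    #(connIcc G R K) * #(H \ K) ≤ #(connIcc G (insert x R) H) := by
  have hxHK : {x} ⊆ H \ K := singleton_subset_iff.2 (mem_sdiff.2 ⟨hx, hK.notMem_of_erase⟩)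
  have hext : #(H \ K) ≤ #(connIcc G {x} (H \ K)) := by
    rw [← card_sdiff_add_card_eq_card hxHK, card_singleton]
    exact (connectedOn_singleton x).card_sdiff_lt_card_connIcc (hK.connectedOn_sdiff hH hx) hxHK
  calc #(connIcc G R K) * #(H \ K)
      ≤ #(connIcc G R K) * #(connIcc G {x} (H \ K)) := Nat.mul_le_mul_left _ hext
    _ ≤ #(connIcc G (R ∪ {x}) H) :=
        card_connIcc_mul_card_connIcc_sdiff_le hR hRx hK.subset_of_erase (mem_singleton_self x)
    _ = #(connIcc G (insert x R) H) := by rw [union_comm, insert_eq]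

theorem ConnectedOn.card_add_card_mul_le_two_mul_connSize (hR : ConnectedOn G R)
    (hH : ConnectedOn G H) (hRH : R ⊆ H) :
    (#H + #R) * #(connIcc G R H) ≤ 2 * connSize G R H := by
  refine ConnectedOn.interval_induction
    (P := fun R H => (#H + #R) * #(connIcc G R H) ≤ 2 * connSize G R H) ?_ ?_ hR hH hRH
  · intro H hH
    simp only [connSize, connIcc_self hH, card_singleton, sum_singleton]
    omega
  · intro R K H x hR hH hxH hRx hRK hK ihx ihK
    have hweight := hK.card_connIcc_mul_card_sdiff_le hH hxH hR.nonempty hRx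
    have hcount := card_connIcc_insert_add_erase G R H x
    have hsize := connSize_insert_add_erase G R H x
    rw [hK.connIcc_erase hR hRK] at hcount
    rw [hK.connSize_erase hR hRK] at hsize
    rw [card_insert_of_notMem fun h => hK.notMem_of_erase (hRK h)] at ihx
    rw [← hcount, ← hsize]
    have hcard : #H = #K + #(H \ K) := by
      rw [add_comm, card_sdiff_add_card_eq_card hK.subset_of_erase]
    rw [hcard] at ihx ⊢
    linarith

theorem ConnectedOn.two_mul_connSize_ge (hH : ConnectedOn G H) (hv : x ∈ H) :
    (#H + 1) * #(connIcc G {x} H) + 2 * connSize G ∅ (H.erase x) ≤ 2 * connSize G ∅ H := by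
  have hthrough := (connectedOn_singleton x).card_add_card_mul_le_two_mul_connSize hH
    (singleton_subset_iff.2 hv)
  have hsplit := connSize_singleton_add_erase G H x
  rw [card_singleton] at hthrough
  omega

theorem ConnectedOn.card_connIcc_singleton_le (hH : ConnectedOn G H) (hr : r ∈ H) (hy : y ∈ H) :
    #(connIcc G {r} H) ≤ #H * #(connIcc G {r, y} H) := by
  have hcard := card_sdiff_add_card_eq_card (singleton_subset_iff.2 hr)
  have hle := (connectedOn_singleton r).card_connIcc_le_mul_insert hH
    (singleton_subset_iff.2 hr) hy
  rw [card_singleton] at hcard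
  rwa [hcard, pair_comm] at hle

end Intervals

/-- `r` is a leaf, with neighbour `y`, of the subgraph of `G` induced by `H`. -/
structure IsPendant (G : SimpleGraph V) (H : Finset V) (r y : V) : Prop where
  mem : r ∈ H
  mem_neighbor : y ∈ H
  adj_iff : ∀ z ∈ H, G.Adj r z ↔ z = y

namespace IsPendant

theorem adj (h : IsPendant G H r y) : G.Adj r y := (h.adj_iff y h.mem_neighbor).2 rfl

theorem ne (h : IsPendant G H r y) : r ≠ y := h.adj.ne

theorem neighbor_mem (h : IsPendant G H r y) (hUH : U ⊆ H) (hU : ConnectedOn G U) (hr : r ∈ U)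
    (hne : U ≠ {r}) : y ∈ U := by
  obtain ⟨a, ha, b, hb, hab⟩ := hU.exists_adj_of_ssubset (singleton_nonempty r)
    ((singleton_subset_iff.2 hr).ssubset_of_ne hne.symm)
  have hbU := (mem_sdiff.1 hb).1
  rw [mem_singleton.1 ha] at hab
  exact (h.adj_iff b (hUH hbU)).1 hab ▸ hbU

theorem connectedOn_erase (h : IsPendant G H r y) (hUH : U ⊆ H) (hU : ConnectedOn G U)
    (hr : r ∈ U) (hy : y ∈ U) : ConnectedOn G (U.erase r) := by
  obtain ⟨K, hyK, hK⟩ := (connectedOn_singleton (G := G) y).exists_isComponent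
    (singleton_subset_iff.2 (mem_erase.2 ⟨h.ne.symm, hy⟩))
  have hyK : y ∈ K := singleton_subset_iff.1 hyK
  have hrK := hK.notMem_of_erase
  have hrest : U \ K = {r} := by
    by_contra hne
    have := h.neighbor_mem (sdiff_subset.trans hUH) (hK.connectedOn_sdiff hU hr)
      (mem_sdiff.2 ⟨hr, hrK⟩) hne
    exact (mem_sdiff.1 this).2 hyK
  have heq : K = U.erase r := by
    rw [erase_eq, ← hrest, Finset.sdiff_sdiff_eq_self hK.subset_of_erase]
  exact heq ▸ hK.connectedOn

theorem card_connIcc_insert (h : IsPendant G H r y) (hyR : y ∈ R) (hrR : r ∉ R) :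
    #(connIcc G (insert r R) H) = #(connIcc G R (H.erase r)) := by
  refine card_nbij' (fun U => U.erase r) (fun U => insert r U) ?_ ?_ ?_ ?_
  · intro U hU
    obtain ⟨hRU, hUH, hU⟩ := mem_connIcc.1 hU
    obtain ⟨hr, hRU⟩ := insert_subset_iff.1 hRU
    exact mem_connIcc.2 ⟨subset_erase.2 ⟨hRU, hrR⟩, erase_subset_erase r hUH,
      h.connectedOn_erase hUH hU hr (hRU hyR)⟩
  · intro U hU
    obtain ⟨hRU, hUH, hU⟩ := mem_connIcc.1 hU
    exact mem_connIcc.2 ⟨insert_subset_insert r hRU,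
      insert_subset h.mem (hUH.trans (erase_subset r H)), hU.insert_of_adj (hRU hyR) h.adj.symm⟩
  · intro U hU
    exact insert_erase ((mem_connIcc.1 hU).1 (mem_insert_self r R))
  · intro U hU
    exact erase_insert fun hr => notMem_erase r H ((mem_connIcc.1 hU).2.1 hr)

theorem card_connIcc_pair (h : IsPendant G H r y) (hz : z ≠ r) :
    #(connIcc G {r, z} H) = #(connIcc G {y, z} (H.erase r)) := by
  have hinsert : connIcc G {r, z} H = connIcc G {r, y, z} H := by
    refine Subset.antisymm (fun U hU => ?_) (connIcc_subset_connIcc (by grind) Subset.rfl)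
    obtain ⟨hrz, hUH, hU⟩ := mem_connIcc.1 hU
    have hy : y ∈ U := h.neighbor_mem hUH hU (hrz (mem_insert_self r {z})) fun hUr =>
      hz (mem_singleton.1 (hUr ▸ hrz (mem_insert_of_mem (mem_singleton_self z))))
    exact mem_connIcc.2 ⟨by grind, hUH, hU⟩
  have hr : r ∉ ({y, z} : Finset V) := by simp [h.ne, hz.symm]
  rw [hinsert, h.card_connIcc_insert (mem_insert_self y {z}) hr]

theorem card_connIcc_singleton (h : IsPendant G H r y) :
    #(connIcc G {r} H) = #(connIcc G {y} (H.erase r)) + 1 := by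
  have hwithout : connIcc G {r} (H.erase y) = {{r}} := by
    ext U
    rw [mem_singleton, mem_connIcc]
    constructor
    · rintro ⟨hr, hUH, hU⟩
      by_contra hne
      exact notMem_erase y H <| hUH <|
        h.neighbor_mem (hUH.trans (erase_subset y H)) hU (singleton_subset_iff.1 hr) hne
    · rintro rfl
      exact ⟨Subset.rfl, singleton_subset_iff.2 (mem_erase.2 ⟨h.ne, h.mem⟩),
        connectedOn_singleton r⟩
  rw [← card_connIcc_insert_add_erase G {r} H y, hwithout, card_singleton, pair_comm,
    h.card_connIcc_insert (mem_singleton_self y) (by simpa using h.ne)]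

end IsPendant

/-- The non-cut vertices of the subgraph of `G` induced by `H`. The only vertex of a singleton
counts as one of them. -/
noncomputable def nonCut (G : SimpleGraph V) (H : Finset V) : Finset V :=
  {y ∈ H | (H.erase y).Nonempty → ConnectedOn G (H.erase y)}

section NonCut

theorem mem_of_mem_nonCut (hy : y ∈ nonCut G H) : y ∈ H := (mem_filter.1 hy).1

theorem connectedOn_erase_of_mem_nonCut (hy : y ∈ nonCut G H) (hz : z ∈ H) (hzy : z ≠ y) :
    ConnectedOn G (H.erase y) :=
  (mem_filter.1 hy).2 ⟨z, mem_erase.2 ⟨hzy, hz⟩⟩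

theorem ConnectedOn.nonCut_nonempty (hH : ConnectedOn G H) : (nonCut G H).Nonempty := by
  obtain ⟨x, hx⟩ := hH.nonempty
  obtain heq | hss := (singleton_subset_iff.2 hx).eq_or_ssubset
  · exact ⟨x, mem_filter.2 ⟨hx, fun hne => by simp [← heq] at hne⟩⟩
  · obtain ⟨y, hy, hconn⟩ := (connectedOn_singleton x).exists_connectedOn_erase hH hss
    exact ⟨y, mem_filter.2 ⟨(mem_sdiff.1 hy).1, fun _ => hconn⟩⟩

theorem isPendant_of_notMem_nonCut (hH : ConnectedOn G H) (hr : r ∈ H)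
    (hy : y ∈ nonCut G (H.erase r)) (hyH : y ∉ nonCut G H) : IsPendant G H r y := by
  obtain ⟨hyr, hy_mem⟩ := mem_erase.1 (mem_of_mem_nonCut hy)
  have hunique : ∀ z ∈ H, G.Adj r z → z = y := by
    intro z hz hrz
    by_contra hzy
    have hzr : z ∈ H.erase r := mem_erase.2 ⟨hrz.ne', hz⟩
    have hconn := (connectedOn_erase_of_mem_nonCut hy hzr hzy).insert_of_adj
      (mem_erase.2 ⟨hzy, hzr⟩) hrz.symm
    rw [erase_right_comm, insert_erase (mem_erase.2 ⟨hyr.symm, hr⟩)] at hconn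
    exact hyH (mem_filter.2 ⟨hy_mem, fun _ => hconn⟩)
  have hss : {r} ⊂ H :=
    ssubset_iff_of_subset (singleton_subset_iff.2 hr) |>.2 ⟨y, hy_mem, by simpa using hyr⟩
  obtain ⟨a, ha, b, hb, hab⟩ := hH.exists_adj_of_ssubset (singleton_nonempty r) hss
  rw [mem_singleton.1 ha] at hab
  have hry : G.Adj r y := hunique b (mem_sdiff.1 hb).1 hab ▸ hab
  exact ⟨hr, hy_mem, fun z hz => ⟨hunique z hz, fun h => h ▸ hry⟩⟩

theorem IsPendant.mem_nonCut (h : IsPendant G H r y) (hz : z ∈ nonCut G (H.erase r))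
    (hzy : z ≠ y) : z ∈ nonCut G H := by
  obtain ⟨hzr, hzH⟩ := mem_erase.1 (mem_of_mem_nonCut hz)
  have hy : y ∈ H.erase r := mem_erase.2 ⟨h.ne.symm, h.mem_neighbor⟩
  have hconn := (connectedOn_erase_of_mem_nonCut hz hy hzy.symm).insert_of_adj
    (mem_erase.2 ⟨hzy.symm, hy⟩) h.adj.symm
  rw [erase_right_comm, insert_erase (mem_erase.2 ⟨hzr.symm, h.mem⟩)] at hconn
  exact mem_filter.2 ⟨hzH, fun _ => hconn⟩

end NonCut

/-- The number of connected sets in the graph obtained from `H` by hanging a path with `j` new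
vertices at `r`: those inside `H`, those meeting both parts, and those inside the path. -/
noncomputable def tailCount (G : SimpleGraph V) (H : Finset V) (r : V) (j : ℕ) : ℕ :=
  #(connIcc G ∅ H) + j * #(connIcc G {r} H) + ∑ i ∈ range (j + 1), i

/-- The number of connected sets through the vertex `y` of `H` in the graph obtained from `H` by
hanging a path with `j` new vertices at `r`. -/
noncomputable def tailCountThrough (G : SimpleGraph V) (H : Finset V) (r : V) (j : ℕ) (y : V) : ℕ :=
  #(connIcc G {y} H) + j * #(connIcc G {r, y} H)

section Tail

theorem IsPendant.tailCount_eq (h : IsPendant G H r y) :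
    tailCount G H r j = tailCount G (H.erase r) y (j + 1) := by
  rw [tailCount, tailCount, sum_range_succ _ (j + 1), ← card_connIcc_singleton_add_erase G H r,
    h.card_connIcc_singleton]
  ring

theorem card_connIcc_pair_add_erase (G : SimpleGraph V) (H : Finset V) (r y : V) :
    #(connIcc G {r, y} H) + #(connIcc G {y} (H.erase r)) = #(connIcc G {y} H) :=
  card_connIcc_insert_add_erase G {y} H r

theorem IsPendant.tailCountThrough_eq (h : IsPendant G H r y) (hz : z ≠ r) :
    tailCountThrough G H r j z = tailCountThrough G (H.erase r) y (j + 1) z := by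
  rw [tailCountThrough, tailCountThrough, ← card_connIcc_pair_add_erase G H r z,
    h.card_connIcc_pair hz]
  ring

theorem ConnectedOn.two_mul_tailCount_le (hH : ConnectedOn G H) (hr : r ∈ H) (hy : y ∈ H)
    (hle : #(connIcc G {r} H) + j ≤ tailCountThrough G H r j y)
    (hheavy : 2 * #(connIcc G ∅ (H.erase r)) ≤ #H * #(connIcc G {y} (H.erase r))) :
    2 * tailCount G H r j ≤ (#H + j + 1) * tailCountThrough G H r j y := by
  have hext := hH.card_connIcc_singleton_le hr hy
  have htri : (∑ i ∈ range (j + 1), i) * 2 = (j + 1) * j := sum_range_id_mul_two (j + 1)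
  rw [tailCountThrough, ← card_connIcc_pair_add_erase G H r y] at hle ⊢
  rw [tailCount, ← card_connIcc_singleton_add_erase G H r]
  generalize #(connIcc G {r} H) = a at *
  generalize #(connIcc G {r, y} H) = b at *
  generalize #(connIcc G {y} (H.erase r)) = c at *
  have hbound : 2 * a + j ≤ (#H + j + 1) * b + c := by linarith
  linarith [Nat.mul_le_mul_left (j + 1) hbound]

-- `#(connIcc G {r} H) + j` counts the connected sets through the far end of the tail, and `hmin`
-- says that no other non-cut vertex lies in fewer. As long as the heavy vertex of `H - r` is a cut
-- vertex of `H`, it is the only neighbour of `r`, and `r` is absorbed into the tail.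
theorem ConnectedOn.exists_nonCut_tailCount_le (hH : ConnectedOn G H) (hr : r ∈ nonCut G H)
    (hnt : (H.erase r).Nonempty)
    (hheavy : ∀ W ⊂ H, ConnectedOn G W →
      ∃ y ∈ nonCut G W, 2 * #(connIcc G ∅ W) ≤ (#W + 1) * #(connIcc G {y} W))
    (hmin : ∀ y ∈ nonCut G H, y ≠ r →
      #(connIcc G {r} H) + j ≤ tailCountThrough G H r j y) :
    ∃ y ∈ nonCut G H, y ≠ r ∧
      2 * tailCount G H r j ≤ (#H + j + 1) * tailCountThrough G H r j y := by
  induction hn : #H generalizing H r j with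
  | zero => simp_all
  | succ n ih =>
  have hrH := mem_of_mem_nonCut hr
  have hss : H.erase r ⊂ H := erase_ssubset hrH
  have hcard : #(H.erase r) = n := by rw [card_erase_of_mem hrH, hn, Nat.add_sub_cancel]
  have hHr : ConnectedOn G (H.erase r) := (mem_filter.1 hr).2 hnt
  obtain ⟨y, hy, hy_heavy⟩ := hheavy _ hss hHr
  obtain ⟨hyr, hyH⟩ := mem_erase.1 (mem_of_mem_nonCut hy)
  by_cases hy_nonCut : y ∈ nonCut G H
  · rw [hcard, ← hn] at hy_heavy
    exact ⟨y, hy_nonCut, hyr,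
      hn ▸ hH.two_mul_tailCount_le hrH hyH (hmin y hy_nonCut hyr) hy_heavy⟩
  have hpen := isPendant_of_notMem_nonCut hH hrH hy hy_nonCut
  have hnt' : ((H.erase r).erase y).Nonempty := by
    by_contra hempty
    refine hy_nonCut (mem_filter.2 ⟨hyH, fun _ => ?_⟩)
    rw [← insert_erase (mem_erase.2 ⟨hyr.symm, hrH⟩), erase_right_comm,
      not_nonempty_iff_eq_empty.1 hempty]
    exact connectedOn_singleton r
  obtain ⟨z, hz, hzy, hz_le⟩ := ih (j := j + 1) hHr hy hnt' (fun W hW => hheavy W (hW.trans hss))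
    (fun z hz hzy => by
      have hzr := (mem_erase.1 (mem_of_mem_nonCut hz)).1
      have := hmin z (hpen.mem_nonCut hz hzy) hzr
      rw [hpen.card_connIcc_singleton, hpen.tailCountThrough_eq hzr] at this
      omega) hcard
  have hzr := (mem_erase.1 (mem_of_mem_nonCut hz)).1
  refine ⟨z, hpen.mem_nonCut hz hzy, hzr, ?_⟩
  rw [hpen.tailCount_eq, hpen.tailCountThrough_eq hzr]
  convert hz_le using 2
  omega

end Tail

theorem ConnectedOn.exists_nonCut_two_mul_card_connIcc_le (hH : ConnectedOn G H) :
    ∃ y ∈ nonCut G H, 2 * #(connIcc G ∅ H) ≤ (#H + 1) * #(connIcc G {y} H) := by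
  induction H using Finset.strongInduction with
  | H H ih =>
  obtain ⟨r, hr, hmin⟩ := exists_min_image (nonCut G H) (fun y => #(connIcc G {y} H))
    hH.nonCut_nonempty
  obtain hempty | hnt := (H.erase r).eq_empty_or_nonempty
  · have hsplit := card_connIcc_singleton_add_erase G H r
    rw [hempty, connIcc_empty_empty, card_empty] at hsplit
    have := hH.nonempty.card_pos
    exact ⟨r, hr, by rw [← hsplit]; exact Nat.mul_le_mul_right _ (by omega)⟩
  · obtain ⟨y, hy, -, hle⟩ := hH.exists_nonCut_tailCount_le (j := 0) hr hnt ih fun y hy _ => by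
      simpa [tailCountThrough] using hmin y hy
    exact ⟨y, hy, by simpa [tailCount, tailCountThrough] using hle⟩

theorem ConnectedOn.card_add_two_mul_card_connIcc_le (hH : ConnectedOn G H) :
    (#H + 2) * #(connIcc G ∅ H) ≤ 3 * connSize G ∅ H := by
  induction H using Finset.strongInduction with
  | H H ih =>
  obtain ⟨y, hy, hheavy⟩ := hH.exists_nonCut_two_mul_card_connIcc_le
  have hyH := mem_of_mem_nonCut hy
  have hcard := card_erase_add_one hyH
  have hrest : (#H + 1) * #(connIcc G ∅ (H.erase y)) ≤ 3 * connSize G ∅ (H.erase y) := by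
    obtain hempty | hne := (H.erase y).eq_empty_or_nonempty
    · simp [hempty, connIcc_empty_empty]
    · rw [← hcard]
      exact ih _ (erase_ssubset hyH) ((mem_filter.1 hy).2 hne)
  have hsize := hH.two_mul_connSize_ge hyH
  have hsplit := card_connIcc_singleton_add_erase G H y
  rw [← hsplit] at hheavy ⊢
  linarith

/-- The subgraph of `G` induced by `H` is `k`-connected. -/
def KConnectedOn (G : SimpleGraph V) (k : ℕ) (H : Finset V) : Prop :=
  k < #H ∧ ∀ S : Finset V, #S < k → ConnectedOn G (H \ S)

namespace KConnectedOn

theorem connectedOn (h : KConnectedOn G k H) (hk : 1 ≤ k) : ConnectedOn G H := by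
  simpa using h.2 ∅ hk

theorem erase (h : KConnectedOn G (k + 1) H) (v : V) : KConnectedOn G k (H.erase v) := by
  refine ⟨?_, fun S hS => ?_⟩
  · have := pred_card_le_card_erase (s := H) (a := v)
    have := h.1
    omega
  · rw [erase_sdiff_comm, ← sdiff_insert]
    exact h.2 (insert v S) ((card_insert_le v S).trans_lt (by omega))

theorem card_mul_card_connIcc_le (h : KConnectedOn G k H) (hk : 1 ≤ k) :
    #H * 2 ^ k * #(connIcc G ∅ H) ≤ 2 * connSize G ∅ H * (2 ^ k + 1) := by
  induction k, hk using Nat.le_induction generalizing H with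
  | base => linarith [(h.connectedOn le_rfl).card_add_two_mul_card_connIcc_le]
  | succ k hk ih =>
  obtain ⟨n, hn⟩ : ∃ n, #H = n + 2 := Nat.exists_eq_add_of_le' (by have := h.1; omega)
  -- The bound for `H - v` inserted into the one for `H`; the last term on both sides turns the
  -- number of connected subsets of `H - v` into that for `H`, avoiding subtraction.
  have hdelete : ∀ v ∈ H,
      (2 ^ k + 1) * (n + 3) * #(connIcc G {v} H) + (n + 1) * 2 ^ k * #(connIcc G ∅ H) ≤
        2 * (2 ^ k + 1) * connSize G ∅ H + (n + 1) * 2 ^ k * #(connIcc G {v} H) := by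
    intro v hv
    have hcard : #(H.erase v) = n + 1 := by rw [card_erase_of_mem hv, hn]; rfl
    have hsize := (h.connectedOn (by omega)).two_mul_connSize_ge hv
    have herase := ih (h.erase v)
    rw [hcard] at herase
    rw [hn] at hsize
    rw [← card_connIcc_singleton_add_erase G H v]
    linarith [Nat.mul_le_mul_left (2 ^ k + 1) hsize]
  have hsum := sum_le_sum hdelete
  simp only [sum_add_distrib, ← mul_sum, sum_card_connIcc_singleton, sum_const, smul_eq_mul,
    hn] at hsum
  have hscaled : (n + 1) * (#H * 2 ^ (k + 1) * #(connIcc G ∅ H)) ≤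
      (n + 1) * (2 * connSize G ∅ H * (2 ^ (k + 1) + 1)) := by
    rw [hn, pow_succ]
    linarith
  exact Nat.le_of_mul_le_mul_left hscaled n.succ_pos

end KConnectedOn

theorem connSets_eq_connIcc [Fintype V] (G : SimpleGraph V) :
    connSets G = connIcc G ∅ univ := by
  ext U
  simp only [connSets, mem_filter, mem_univ, true_and, mem_connIcc, empty_subset, subset_univ]
  exact ⟨fun h => h.2, fun h => ⟨h.nonempty, h⟩⟩

theorem KConnected.kConnectedOn_univ [Fintype V] (h : KConnected k G) : KConnectedOn G k univ :=
  ⟨h.1, fun S hS => by simpa only [ConnectedOn, compl_eq_univ_sdiff] using h.2 S hS⟩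

theorem KConnected.connSets_nonempty [Fintype V] (h : KConnected k G) (hk : 1 ≤ k) :
    (connSets G).Nonempty := by
  rw [connSets_eq_connIcc]
  exact ⟨univ, mem_connIcc.2
    ⟨empty_subset _, Subset.rfl, h.kConnectedOn_univ.connectedOn hk⟩⟩

end ConnectedSets

theorem stmt_7 {V : Type*} [Fintype V] (G : SimpleGraph V) (k : ℕ) (hk : 1 ≤ k)
    (hG : KConnected k G) :
    (∑ U ∈ connSets G, (U.card : ℝ)) / ((Fintype.card V : ℝ) * (connSets G).card) ≥
      (1 / 2) * (1 - 1 / (2 ^ k + 1)) := by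
  have hbound : (Fintype.card V : ℝ) * 2 ^ k * #(connSets G) ≤
      2 * (∑ U ∈ connSets G, (#U : ℝ)) * (2 ^ k + 1) := by
    rw [connSets_eq_connIcc]
    exact_mod_cast hG.kConnectedOn_univ.card_mul_card_connIcc_le hk
  have hcount : (0 : ℝ) < #(connSets G) := by exact_mod_cast (hG.connSets_nonempty hk).card_pos
  have horder : (0 : ℝ) < Fintype.card V := by exact_mod_cast (Nat.zero_le k).trans_lt hG.1
  have hratio : (1 / 2 : ℝ) * (1 - 1 / (2 ^ k + 1)) = 2 ^ k / (2 * (2 ^ k + 1)) := by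
    field_simp
    ring
  rw [ge_iff_le, hratio, div_le_div_iff₀ (by positivity) (by positivity)]
  linarith
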